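/- arXiv:1712.04298 — 7 statements merged into one kernel-verified Lean document; each statement's English description precedes it below -/
import Mathlib

section
/- Let U ⊆ ℂⁿ be a nonempty connected open set, let p ∈ U, and let f : U → ℂ^N and f' : U → ℂ^{N'} (N, N' finite) be holomorphic maps with f(p) = 0 and f'(p) = 0 which are full, i.e. the ℂ-linear span of f(U) is all of ℂ^N and the ℂ-linear span of f'(U) is all of ℂ^{N'}. If ‖f(z) − f(w)‖ = ‖f'(z) − f'(w)‖ for all z, w ∈ U (Euclidean norms), then N = N' and there exists a ℂ-linear isometric isomorphism (unitary map) A : ℂ^N → ℂ^{N'} such that f'(z) = A(f(z)) for all z ∈ U. -/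
/-!
Taking `w = p` in the hypothesis gives `‖f z‖ = ‖f' z‖`, and polarization then shows that the
real parts of `⟪f w, f z⟫` and `⟪f' w, f' z⟫` agree. For fixed `w` the difference of these two
inner products is holomorphic in `z`, has vanishing real part and vanishes at `z = p`, so it is
identically zero on the connected set `U` (`eqOn_zero_of_re_eq_zero`). Two spanning families with
the same Gram matrix differ by a unitary map (`exists_linearIsometryEquiv_of_inner_eq`), and a
unitary map preserves the dimension.
-/

/-- A holomorphic function with vanishing real part has zero derivative, since the range of the
derivative is a complex subspace of `iℝ`; on a connected open set it is therefore constant. -/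
lemma eqOn_zero_of_re_eq_zero {E : Type*} [NormedAddCommGroup E] [NormedSpace ℂ E]
    {U : Set E} (hU : IsOpen U) (hconn : IsPreconnected U) {p : E} (hp : p ∈ U) {h : E → ℂ}
    (hd : DifferentiableOn ℂ h U) (hre : ∀ z ∈ U, (h z).re = 0) (hhp : h p = 0) :
    ∀ z ∈ U, h z = 0 := by
  have hfd : U.EqOn (fderiv ℂ h) 0 := by
    intro z hz
    have h1 : HasFDerivAt h ((fderiv ℂ h z).restrictScalars ℝ) z :=
      ((hd.differentiableAt (hU.mem_nhds hz)).hasFDerivAt).restrictScalars ℝ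
    have h2 := Complex.reCLM.hasFDerivAt.comp z h1
    have h3 : HasFDerivAt (Complex.reCLM ∘ h) (0 : E →L[ℝ] ℝ) z := by
      refine (hasFDerivAt_const (0 : ℝ) z).congr_of_eventuallyEq ?_
      filter_upwards [hU.mem_nhds hz] with y hy
      simpa using hre y hy
    have h4 : ∀ v, (fderiv ℂ h z v).re = 0 := fun v => by
      simpa using DFunLike.congr_fun (h2.unique h3) v
    ext v
    refine Complex.ext (h4 v) ?_
    -- The imaginary part of the derivative along `v` is read off from the direction `i v`.
    simpa using h4 (Complex.I • v)
  intro z hz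
  rw [hU.is_const_of_fderiv_eq_zero hconn hd hfd hz hp, hhp]

/-- Two spanning families with the same Gram matrix are related by a unitary map: the linear
combination maps `L`, `L'` of the two families satisfy `‖L c‖ = ‖L' c‖`, so that `L'` factors
through `L`. -/
lemma exists_linearIsometryEquiv_of_inner_eq {ι E F : Type*}
    [NormedAddCommGroup E] [InnerProductSpace ℂ E] [NormedAddCommGroup F] [InnerProductSpace ℂ F]
    (u : ι → E) (v : ι → F) (hu : Submodule.span ℂ (Set.range u) = ⊤)
    (hv : Submodule.span ℂ (Set.range v) = ⊤)
    (huv : ∀ i j, inner ℂ (u i) (u j) = inner ℂ (v i) (v j)) :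
    ∃ A : E ≃ₗᵢ[ℂ] F, ∀ i, v i = A (u i) := by
  set L := Finsupp.linearCombination ℂ u with hL
  set L' := Finsupp.linearCombination ℂ v with hL'
  have hLr : LinearMap.range L = ⊤ := by rw [hL, Finsupp.range_linearCombination, hu]
  have hLr' : LinearMap.range L' = ⊤ := by rw [hL', Finsupp.range_linearCombination, hv]
  have hnorm : ∀ c, ‖L c‖ = ‖L' c‖ := by
    intro c
    rw [@norm_eq_sqrt_re_inner ℂ, @norm_eq_sqrt_re_inner ℂ]
    simp only [hL, hL', Finsupp.linearCombination_apply, Finsupp.sum_inner, Finsupp.inner_sum,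
      inner_smul_left, inner_smul_right, huv]
  obtain ⟨s, hs⟩ := L.exists_rightInverse_of_surjective hLr
  have hs' : ∀ x, L (s x) = x := fun x => LinearMap.congr_fun hs x
  have hfac : ∀ c, L' (s (L c)) = L' c := by
    intro c
    rw [← sub_eq_zero, ← map_sub, ← norm_eq_zero, ← hnorm, map_sub, hs', sub_self, norm_zero]
  let A : E →ₗᵢ[ℂ] F := ⟨L' ∘ₗ s, fun x => by
    rw [LinearMap.comp_apply, ← hnorm, hs']⟩
  have hA : ∀ c, A (L c) = L' c := hfac
  have hsurj : Function.Surjective A := fun y => by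
    obtain ⟨c, rfl⟩ := LinearMap.range_eq_top.1 hLr' y
    exact ⟨L c, hA c⟩
  refine ⟨LinearIsometryEquiv.ofSurjective A hsurj, fun i => ?_⟩
  simpa [hL, hL'] using (hA (Finsupp.single i 1)).symm

/-- Calabi's rigidity theorem for Kähler immersions into complex Euclidean space:
two full holomorphic maps of a connected open set `U ⊆ ℂⁿ` into `ℂ^N` and `ℂ^{N'}`
sending `p` to `0` and inducing the same "distance" function
`‖f z − f w‖ = ‖f' z − f' w‖` have `N = N'` and differ by a unitary map. -/
theorem calabi_rigidity (n N N' : ℕ) (U : Set (Fin n → ℂ)) (hU : IsOpen U)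
    (hconn : IsConnected U) (p : Fin n → ℂ) (hp : p ∈ U)
    (f : (Fin n → ℂ) → EuclideanSpace ℂ (Fin N))
    (f' : (Fin n → ℂ) → EuclideanSpace ℂ (Fin N'))
    (hf : DifferentiableOn ℂ f U) (hf' : DifferentiableOn ℂ f' U)
    (hfp : f p = 0) (hf'p : f' p = 0)
    (hfull : Submodule.span ℂ (f '' U) = ⊤)
    (hfull' : Submodule.span ℂ (f' '' U) = ⊤)
    (hiso : ∀ z ∈ U, ∀ w ∈ U, ‖f z - f w‖ = ‖f' z - f' w‖) :
    N = N' ∧ ∃ A : EuclideanSpace ℂ (Fin N) ≃ₗᵢ[ℂ] EuclideanSpace ℂ (Fin N'),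
      ∀ z ∈ U, f' z = A (f z) := by
  have hnorm : ∀ z ∈ U, ‖f z‖ = ‖f' z‖ := fun z hz => by
    simpa [hfp, hf'p] using hiso z hz p hp
  have hre : ∀ w ∈ U, ∀ z ∈ U, (inner ℂ (f w) (f z)).re = (inner ℂ (f' w) (f' z)).re := by
    intro w hw z hz
    have h1 := @norm_sub_sq ℂ _ _ _ _ (f w) (f z)
    have h2 := @norm_sub_sq ℂ _ _ _ _ (f' w) (f' z)
    rw [hiso w hw z hz, hnorm w hw, hnorm z hz] at h1
    simp only [RCLike.re_to_complex] at h1 h2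
    linarith
  have hinner : ∀ w ∈ U, ∀ z ∈ U, inner ℂ (f w) (f z) = inner ℂ (f' w) (f' z) := by
    intro w hw z hz
    refine sub_eq_zero.1 (eqOn_zero_of_re_eq_zero (h := fun z =>
      inner ℂ (f w) (f z) - inner ℂ (f' w) (f' z)) hU hconn.isPreconnected hp ?_ ?_ ?_ z hz)
    · exact ((innerSL ℂ (f w)).differentiable.comp_differentiableOn hf).sub
        ((innerSL ℂ (f' w)).differentiable.comp_differentiableOn hf')
    · intro z hz
      simp [hre w hw z hz]
    · simp [hfp, hf'p]
  obtain ⟨A, hA⟩ := exists_linearIsometryEquiv_of_inner_eq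
    (fun z : U => f z) (fun z : U => f' z)
    (by rwa [Set.image_eq_range] at hfull) (by rwa [Set.image_eq_range] at hfull')
    (fun w z => hinner w w.2 z z.2)
  refine ⟨?_, A, fun z hz => hA ⟨z, hz⟩⟩
  simpa using A.toLinearEquiv.finrank_eq
end

section
/- Let n ≥ 1, let ℓ be a real number, and let S₁, S₂ be complex symmetric n×n matrices satisfying conj(S₁)·S₁ + conj(S₂)·S₂ = ℓ·I (conj denotes entrywise complex conjugation, I the identity matrix). Then there exist a 2×2 unitary matrix (c_{pq}) and an n×n unitary matrix T such that, setting S₁' = c_{11}S₁ + c_{12}S₂ and S₂' = c_{21}S₁ + c_{22}S₂, both Tᵀ·S₁'·T and Tᵀ·S₂'·T are diagonal matrices, and the diagonal entries of Tᵀ·S₁'·T are nonnegative real numbers. -/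
open Matrix

/-!
The unitary `c` can be taken to be the identity: `S₁` and `S₂` are already simultaneously
diagonalizable by a unitary congruence.

The engine is `exists_orthogonal_congr_diagonal`. If `S = A + iB` is symmetric with `A`, `B` real,
then the imaginary part of `Sᴴ S = (A - iB)(A + iB)` is `AB - BA`. So if `Sᴴ S` is a real matrix,
`A` and `B` are commuting real symmetric matrices, and together with any real diagonal matrix `D`
commuting with `S` they are simultaneously diagonalized by a real orthogonal matrix `R`. As `Rᵀ` is
both the transpose and the adjoint of `R`, this is a unitary congruence on `S`.

Applied after a unitary diagonalization of `Sᴴ S`, with `D = 0`, this gives the Takagi factorization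
(`exists_takagi`): a diagonal unitary matrix removes the phases. For the theorem, bring `S₁` to
its Takagi form `D`; the constraint then reads `S₂ᴴ S₂ = ℓ - D²`. Since `S₂` is symmetric, it
commutes with the real diagonal matrix `S₂ᴴ S₂`, hence with `D²`, and hence with `D` because `D ≥ 0`.
Another application of the engine, to `S₂` and `D`, finishes the proof.
-/

open Module.End in
/-- Commuting real symmetric matrices have a common orthonormal eigenbasis, here the columns
of `R`. -/
lemma exists_orthogonal_joint_diagonal {n : ℕ} {ι : Type*} [Finite ι]
    (A : ι → Matrix (Fin n) (Fin n) ℝ)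
    (hA : ∀ i, (A i)ᵀ = A i) (hC : ∀ i j, A i * A j = A j * A i) :
    ∃ (R : Matrix (Fin n) (Fin n) ℝ) (d : ι → Fin n → ℝ),
      Rᵀ * R = 1 ∧ ∀ i, Rᵀ * A i * R = diagonal (d i) := by
  classical
  have hT : ∀ i, (toEuclideanLin (A i)).IsSymmetric := fun i =>
    isSymmetric_toEuclideanLin_iff.mpr (by
      rw [IsHermitian, conjTranspose_eq_transpose_of_trivial, hA])
  have hcomm : Pairwise (Function.onFun Commute fun i => toEuclideanLin (A i)) := by
    intro i j _
    refine LinearMap.ext fun x => ?_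
    simp [Matrix.toLpLin_apply, Matrix.mulVec_mulVec, hC i j]
  have hint := LinearMap.IsSymmetric.directSum_isInternal_of_pairwise_commute hT hcomm
  have horth := LinearMap.IsSymmetric.orthogonalFamily_iInf_eigenspaces hT
  -- Only finitely many joint eigenspaces are nonzero; discard the others.
  have hfin := WellFoundedGT.finite_ne_bot_of_iSupIndep hint.submodule_iSupIndep
  have : Fintype {χ : ι → ℝ // ⨅ j, eigenspace (toEuclideanLin (A j)) (χ j) ≠ ⊥} :=
    hfin.fintype
  have hint' := DirectSum.isInternal_ne_bot_iff.mpr hint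
  have horth' := horth.comp
    (Subtype.val_injective (p := fun χ : ι → ℝ =>
      ⨅ j, eigenspace (toEuclideanLin (A j)) (χ j) ≠ ⊥))
  have hrank : Module.finrank ℝ (EuclideanSpace ℝ (Fin n)) = n := by simp
  obtain ⟨b, χ, hb⟩ : ∃ (b : OrthonormalBasis (Fin n) ℝ (EuclideanSpace ℝ (Fin n)))
      (χ : Fin n → ι → ℝ), ∀ i k, A i *ᵥ (b k).ofLp = χ k i • (b k).ofLp := by
    refine ⟨hint'.subordinateOrthonormalBasis hrank horth',
      fun a => (hint'.subordinateOrthonormalBasisIndex hrank a horth').1, fun i k => ?_⟩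
    have h := hint'.subordinateOrthonormalBasis_subordinate hrank k horth'
    have h2 := (Submodule.mem_iInf _).mp h i
    rw [mem_eigenspace_iff] at h2
    exact congrArg WithLp.ofLp h2
  have hbb : ∀ j k, (b j).ofLp ⬝ᵥ (b k).ofLp = if j = k then 1 else 0 := by
    intro j k
    have h := orthonormal_iff_ite.mp b.orthonormal j k
    rw [EuclideanSpace.inner_eq_star_dotProduct, star_trivial, dotProduct_comm] at h
    exact h
  refine ⟨Matrix.of fun j k => b k j, fun i k => χ k i, ?_, fun i => ?_⟩
  · ext j k
    rw [Matrix.one_apply, ← hbb j k]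
    rfl
  · ext j k
    have h1 : ((Matrix.of fun j k => b k j)ᵀ * A i * (Matrix.of fun j k => b k j)) j k
        = (b j).ofLp ⬝ᵥ (A i *ᵥ (b k).ofLp) := by
      rw [Matrix.mul_assoc]
      rfl
    rw [h1, hb, dotProduct_smul, hbb, diagonal_apply]
    by_cases hjk : j = k <;> simp [hjk]

/-- A symmetric `S` with `Sᴴ S` real diagonal, and a nonnegative diagonal matrix `D` commuting
with `S` (this is `hSD`, entrywise), are brought to diagonal form by one unitary congruence: `R` is
the common real orthogonal eigenbasis of `D`, `Re S` and `Im S`. -/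
lemma exists_orthogonal_congr_diagonal {n : ℕ} (S : Matrix (Fin n) (Fin n) ℂ) (hS : Sᵀ = S)
    (c D : Fin n → ℝ) (hc : Sᴴ * S = diagonal fun i => (c i : ℂ)) (hD : ∀ i, 0 ≤ D i)
    (hSD : ∀ i j, S i j ≠ 0 → D i = D j) :
    ∃ (R : Matrix (Fin n) (Fin n) ℂ) (e : Fin n → ℝ) (f : Fin n → ℂ),
      Rᴴ * R = 1 ∧ (∀ i, 0 ≤ e i) ∧
      Rᵀ * diagonal (fun i => (D i : ℂ)) * R = diagonal (fun i => (e i : ℂ)) ∧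
      Rᵀ * S * R = diagonal f := by
  let A : Matrix (Fin n) (Fin n) ℝ := S.map Complex.re
  let B : Matrix (Fin n) (Fin n) ℝ := S.map Complex.im
  have hsymm : ∀ i j, S i j = S j i := fun i j => congrFun (congrFun hS j) i
  have hAT : Aᵀ = A := by ext i j; simp [A, hsymm i j]
  have hBT : Bᵀ = B := by ext i j; simp [B, hsymm i j]
  have hAB : A * B = B * A := by
    ext i j
    -- Compare imaginary parts in `hc`.
    have h := congrArg Complex.im (congrFun (congrFun hc i) j)
    have h0 : ((diagonal fun i => (c i : ℂ)) i j).im = 0 := by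
      rw [diagonal_apply]; split_ifs <;> simp
    rw [h0, mul_apply, Complex.im_sum] at h
    rw [mul_apply, mul_apply, ← sub_eq_zero, ← Finset.sum_sub_distrib, ← h]
    refine Finset.sum_congr rfl fun k _ => ?_
    simp [A, B, hsymm k i]
    ring
  have hDA : diagonal D * A = A * diagonal D := by
    ext i j
    rw [diagonal_mul, mul_diagonal]
    by_cases h : S i j = 0
    · simp [A, h]
    · rw [hSD i j h, mul_comm]
  have hDB : diagonal D * B = B * diagonal D := by
    ext i j
    rw [diagonal_mul, mul_diagonal]
    by_cases h : S i j = 0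
    · simp [B, h]
    · rw [hSD i j h, mul_comm]
  obtain ⟨R, d, hR, hd⟩ := exists_orthogonal_joint_diagonal ![diagonal D, A, B]
    (by intro i; fin_cases i <;> simp [hAT, hBT])
    (by intro i j; fin_cases i <;> fin_cases j <;> simp [hAB, hDA, hDB])
  have h0 : Rᵀ * diagonal D * R = diagonal (d 0) := hd 0
  have h1 : Rᵀ * A * R = diagonal (d 1) := hd 1
  have h2 : Rᵀ * B * R = diagonal (d 2) := hd 2
  have hRH : (R.map Complex.ofRealHom)ᴴ = (Rᵀ).map Complex.ofRealHom := by
    ext i j; simp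
  have hdiag : ∀ v : Fin n → ℝ,
      (diagonal v).map Complex.ofRealHom = diagonal (fun i => (v i : ℂ)) := fun v => by
    rw [diagonal_map (by simp)]; rfl
  have hmul : ∀ M : Matrix (Fin n) (Fin n) ℝ,
      (R.map Complex.ofRealHom)ᵀ * M.map Complex.ofRealHom * R.map Complex.ofRealHom
        = (Rᵀ * M * R).map Complex.ofRealHom := fun M => by
    rw [Matrix.map_mul, Matrix.map_mul, transpose_map]
  have hSAB : S = A.map Complex.ofRealHom + Complex.I • B.map Complex.ofRealHom := by
    ext i j
    simp only [A, B, Matrix.add_apply, Matrix.smul_apply, Matrix.map_apply, smul_eq_mul,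
      Complex.ofRealHom_eq_coe]
    rw [mul_comm, Complex.re_add_im]
  refine ⟨R.map Complex.ofRealHom, d 0, fun i => d 1 i + Complex.I * d 2 i, ?_, ?_, ?_, ?_⟩
  · rw [hRH, ← Matrix.map_mul, hR, Matrix.map_one _ (by simp) (by simp)]
  · intro i
    have h := congrFun (congrFun h0 i) i
    rw [diagonal_apply_eq] at h
    rw [← h, Matrix.mul_assoc, mul_apply]
    refine Finset.sum_nonneg fun k _ => ?_
    rw [diagonal_mul, transpose_apply]
    nlinarith [mul_nonneg (hD k) (mul_self_nonneg (R k i))]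
  · rw [← hdiag, hmul, h0, hdiag]
  · rw [hSAB, Matrix.mul_add, Matrix.add_mul, Matrix.mul_smul, Matrix.smul_mul, hmul, hmul, h1, h2,
      hdiag, hdiag]
    ext i j
    by_cases hij : i = j <;> simp [hij]

lemma conjTranspose_mul_self_congr {n : ℕ} {S T : Matrix (Fin n) (Fin n) ℂ} (hT : Tᴴ * T = 1) :
    (Tᵀ * S * T)ᴴ * (Tᵀ * S * T) = Tᴴ * (Sᴴ * S) * T := by
  have h : (Tᵀ)ᴴ * Tᵀ = 1 := by
    have := congrArg Matrix.transpose (mul_eq_one_comm.mp hT)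
    rw [transpose_mul, transpose_one] at this
    exact this
  calc (Tᵀ * S * T)ᴴ * (Tᵀ * S * T) = Tᴴ * Sᴴ * ((Tᵀ)ᴴ * Tᵀ) * S * T := by
        simp only [conjTranspose_mul, Matrix.mul_assoc]
    _ = _ := by rw [h]; simp only [Matrix.mul_one, Matrix.mul_assoc]

lemma conjTranspose_mul_self_mul {n : ℕ} {T U : Matrix (Fin n) (Fin n) ℂ} (hT : Tᴴ * T = 1)
    (hU : Uᴴ * U = 1) : (T * U)ᴴ * (T * U) = 1 := by
  rw [conjTranspose_mul, Matrix.mul_assoc, ← Matrix.mul_assoc Tᴴ, hT, Matrix.one_mul, hU]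

lemma transpose_mul_congr {n : ℕ} (S T U : Matrix (Fin n) (Fin n) ℂ) :
    (T * U)ᵀ * S * (T * U) = Uᵀ * (Tᵀ * S * T) * U := by
  simp only [transpose_mul, Matrix.mul_assoc]

lemma transpose_congr_eq {n : ℕ} {S : Matrix (Fin n) (Fin n) ℂ} (hS : Sᵀ = S)
    (T : Matrix (Fin n) (Fin n) ℂ) : (Tᵀ * S * T)ᵀ = Tᵀ * S * T := by
  simp only [transpose_mul, transpose_transpose, hS, Matrix.mul_assoc]

/-- The Takagi factorization of a complex symmetric matrix. -/
lemma exists_takagi {n : ℕ} (S : Matrix (Fin n) (Fin n) ℂ) (hS : Sᵀ = S) :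
    ∃ (T : Matrix (Fin n) (Fin n) ℂ) (d : Fin n → ℝ), Tᴴ * T = 1 ∧ (∀ i, 0 ≤ d i) ∧
      Tᵀ * S * T = diagonal (fun i => (d i : ℂ)) := by
  have hH : (Sᴴ * S).IsHermitian := isHermitian_conjTranspose_mul_self S
  obtain ⟨V, c, hV, hVc⟩ : ∃ (V : Matrix (Fin n) (Fin n) ℂ) (c : Fin n → ℝ), Vᴴ * V = 1 ∧
      Vᴴ * (Sᴴ * S) * V = diagonal (fun i => (c i : ℂ)) := by
    have hV : (hH.eigenvectorUnitary : Matrix (Fin n) (Fin n) ℂ)ᴴ * hH.eigenvectorUnitary = 1 :=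
      Unitary.coe_star_mul_self hH.eigenvectorUnitary
    refine ⟨hH.eigenvectorUnitary, hH.eigenvalues, hV, ?_⟩
    have h := hH.conjStarAlgAut_star_eigenvectorUnitary
    rw [Unitary.conjStarAlgAut_star_apply] at h
    exact h
  obtain ⟨R, -, f, hR, -, -, hf⟩ := exists_orthogonal_congr_diagonal (Vᵀ * S * V)
    (transpose_congr_eq hS V) c 0
    (by rw [conjTranspose_mul_self_congr hV, hVc]) (fun _ => le_rfl) (fun _ _ _ => rfl)
  -- `p i` is a square root of the inverse phase of `f i`.
  let p : Fin n → ℂ := fun i => Complex.exp (((-(f i).arg / 2 : ℝ) : ℂ) * Complex.I)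
  have hp : ∀ i, star (p i) * p i = 1 := fun i => by
    have h1 : ‖p i‖ = 1 := Complex.norm_exp_ofReal_mul_I _
    have h2 : star (p i) * p i = ((‖p i‖ ^ 2 : ℝ) : ℂ) := by
      push_cast; exact Complex.conj_mul' (p i)
    rw [h2, h1]; simp
  have hpf : ∀ i, p i * f i * p i = (‖f i‖ : ℂ) := fun i => by
    have h : p i * p i * Complex.exp ((f i).arg * Complex.I) = 1 := by
      simp only [p]
      rw [← Complex.exp_add, ← Complex.exp_add, Complex.exp_eq_one_iff]
      exact ⟨0, by push_cast; ring⟩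
    calc p i * f i * p i
        = p i * ((‖f i‖ : ℂ) * Complex.exp ((f i).arg * Complex.I)) * p i := by
          rw [Complex.norm_mul_exp_arg_mul_I]
      _ = ‖f i‖ * (p i * p i * Complex.exp ((f i).arg * Complex.I)) := by ring
      _ = _ := by rw [h, mul_one]
  refine ⟨V * R * diagonal p, fun i => ‖f i‖,
    conjTranspose_mul_self_mul (conjTranspose_mul_self_mul hV hR) ?_, fun i => norm_nonneg _, ?_⟩
  · rw [diagonal_conjTranspose, diagonal_mul_diagonal, ← diagonal_one]
    exact congrArg diagonal (funext hp)
  · rw [transpose_mul_congr, transpose_mul_congr, hf, diagonal_transpose, diagonal_mul_diagonal,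
      diagonal_mul_diagonal]
    exact congrArg diagonal (funext hpf)

/-- Hulin's normal-form lemma: if `S₁, S₂` are complex symmetric `n×n` matrices
with `conj(S₁)·S₁ + conj(S₂)·S₂ = ℓ·I`, then there are a `2×2` unitary `c` and an
`n×n` unitary `T` such that the combinations `S₁' = c₁₁S₁ + c₁₂S₂` and
`S₂' = c₂₁S₁ + c₂₂S₂` satisfy: `Tᵀ S₁' T` and `Tᵀ S₂' T` are diagonal, and the
diagonal entries of `Tᵀ S₁' T` are nonnegative reals. -/
theorem hulin_normal_form (n : ℕ) (hn : 1 ≤ n) (ℓ : ℝ)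
    (S₁ S₂ : Matrix (Fin n) (Fin n) ℂ)
    (hS₁ : S₁ᵀ = S₁) (hS₂ : S₂ᵀ = S₂)
    (hsum : S₁.map (starRingEnd ℂ) * S₁ + S₂.map (starRingEnd ℂ) * S₂ =
      (ℓ : ℂ) • (1 : Matrix (Fin n) (Fin n) ℂ)) :
    ∃ (c : Matrix (Fin 2) (Fin 2) ℂ) (T : Matrix (Fin n) (Fin n) ℂ),
      c.conjTranspose * c = 1 ∧ T.conjTranspose * T = 1 ∧
      (Tᵀ * (c 0 0 • S₁ + c 0 1 • S₂) * T).IsDiag ∧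
      (Tᵀ * (c 1 0 • S₁ + c 1 1 • S₂) * T).IsDiag ∧
      ∀ i, ∃ r : ℝ, 0 ≤ r ∧ (Tᵀ * (c 0 0 • S₁ + c 0 1 • S₂) * T) i i = (r : ℂ) := by
  have hconj : ∀ S : Matrix (Fin n) (Fin n) ℂ, Sᵀ = S → S.map (starRingEnd ℂ) = Sᴴ := by
    intro S hS
    conv_rhs => rw [← hS]
    rfl
  rw [hconj S₁ hS₁, hconj S₂ hS₂] at hsum
  obtain ⟨T, d, hT, hd, hTd⟩ := exists_takagi S₁ hS₁
  set S : Matrix (Fin n) (Fin n) ℂ := Tᵀ * S₂ * T with hSdef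
  have hS : Sᵀ = S := transpose_congr_eq hS₂ T
  have hc : Sᴴ * S = diagonal fun i => ((ℓ - d i * d i : ℝ) : ℂ) := by
    have h1 := conjTranspose_mul_self_congr (S := S₁) hT
    rw [hTd, diagonal_conjTranspose, diagonal_mul_diagonal] at h1
    rw [hSdef, conjTranspose_mul_self_congr hT, eq_sub_of_add_eq' hsum, Matrix.mul_sub,
      Matrix.sub_mul, ← h1, Matrix.mul_smul, Matrix.mul_one, Matrix.smul_mul, hT]
    ext i j
    by_cases hij : i = j <;> simp [hij]
  have hc' : S * Sᴴ = diagonal fun i => ((ℓ - d i * d i : ℝ) : ℂ) := by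
    have hST : Sᴴᵀ = Sᴴ := (congrArg (fun M => M.map star) hS).symm
    have h := congrArg Matrix.transpose hc
    rw [transpose_mul, diagonal_transpose, hS, hST] at h
    exact h
  have hSd : ∀ i j, S i j ≠ 0 → d i = d j := by
    intro i j hij
    -- The two sides of `(S Sᴴ) S = S (Sᴴ S)`, at the entry `(i, j)`.
    have h : (S * Sᴴ * S) i j = (S * (Sᴴ * S)) i j := by rw [Matrix.mul_assoc]
    rw [hc, hc', diagonal_mul, mul_diagonal, mul_comm] at h
    have h2 : ℓ - d i * d i = ℓ - d j * d j := by exact_mod_cast mul_left_cancel₀ hij h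
    exact (mul_self_inj (hd i) (hd j)).mp (by linarith)
  obtain ⟨R, e, f, hR, he, hRe, hRf⟩ :=
    exists_orthogonal_congr_diagonal S hS _ d hc hd hSd
  have h1 : (T * R)ᵀ * S₁ * (T * R) = diagonal (fun i => (e i : ℂ)) := by
    rw [transpose_mul_congr, hTd, hRe]
  have h2 : (T * R)ᵀ * S₂ * (T * R) = diagonal f := by
    rw [transpose_mul_congr, ← hSdef, hRf]
  refine ⟨1, T * R, by simp, conjTranspose_mul_self_mul hT hR, ?_, ?_, fun i => ⟨e i, he i, ?_⟩⟩
  · simp [-transpose_mul, h1, isDiag_diagonal]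
  · simp [-transpose_mul, h2, isDiag_diagonal]
  · simp [-transpose_mul, h1]
end

section
/- For all real numbers ρ₁ ≥ 0, ρ₂ ≥ 0 and α ∈ ℝ, the following inequality holds: ∫₀^{ρ₁²} log(1+s)/s ds + ∫₀^{ρ₂²} log(1+s)/s ds − ∫₀^{ρ₁ρ₂} log(1 + 2y·cos α + y²)/y dy ≥ 0. -/
/-!
Rescaling each integral to `[0, 1]` turns the three integrands into `log (1 + ρ₁² t) / t`,
`log (1 + ρ₂² t) / t` and `log (1 + 2 ρ₁ρ₂ t cos α + (ρ₁ρ₂ t)²) / t`, and the inequality then holds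
pointwise: `(1 + ρ₁² t) (1 + ρ₂² t) = 1 + (ρ₁² + ρ₂²) t + (ρ₁ρ₂ t)²`, while
`2 ρ₁ρ₂ cos α ≤ 2 ρ₁ρ₂ ≤ ρ₁² + ρ₂²`. The first two integrands are bounded, hence integrable.
Integrability of the third is not needed: it lies below a nonnegative integrable function, and a
non-integrable function has integral `0` by convention.
-/

/-- No hypothesis `c ≠ 0` is needed: for `c = 0` both sides vanish because `f 0 = 0`. -/
lemma integral_div_id_rescale (f : ℝ → ℝ) (hf : f 0 = 0) (c : ℝ) :
    ∫ s in (0:ℝ)..c, f s / s = ∫ t in (0:ℝ)..1, f (c * t) / t := by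
  have h := intervalIntegral.mul_integral_comp_mul_left (a := 0) (b := 1)
    (f := fun s => f s / s) c
  simp only [mul_zero, mul_one] at h
  rw [← h, ← intervalIntegral.integral_const_mul]
  congr 1
  ext t
  rcases eq_or_ne c 0 with rfl | hc
  · simp [hf]
  · rw [← mul_div_assoc, mul_div_mul_left _ _ hc]

lemma intervalIntegrable_log_one_add_mul_div (c : ℝ) (hc : 0 ≤ c) :
    IntervalIntegrable (fun t => Real.log (1 + c * t) / t) MeasureTheory.volume 0 1 := by
  refine (intervalIntegrable_const (c := c)).mono_fun ?_ ?_
  · exact Measurable.aestronglyMeasurable (by fun_prop)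
  · refine (MeasureTheory.ae_restrict_iff' measurableSet_uIoc).2 (.of_forall fun t ht => ?_)
    rw [Set.uIoc_of_le zero_le_one] at ht
    have hct : 0 ≤ c * t := mul_nonneg hc ht.1.le
    have h0 : 0 ≤ Real.log (1 + c * t) := Real.log_nonneg (by linarith)
    beta_reduce
    rw [Real.norm_of_nonneg (div_nonneg h0 ht.1.le), Real.norm_of_nonneg hc, div_le_iff₀ ht.1]
    linarith [Real.log_le_sub_one_of_pos (show 0 < 1 + c * t by linarith)]

lemma log_le_log_add_log (a b α t : ℝ) (ha : 0 ≤ a) (hb : 0 ≤ b) (ht : 0 ≤ t) :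
    Real.log (1 + 2 * (a * b * t) * Real.cos α + (a * b * t) ^ 2) ≤
      Real.log (1 + a ^ 2 * t) + Real.log (1 + b ^ 2 * t) := by
  have h1 : 0 < 1 + a ^ 2 * t := by positivity
  have h2 : 0 < 1 + b ^ 2 * t := by positivity
  have hy : 0 ≤ a * b * t := by positivity
  rw [← Real.log_mul h1.ne' h2.ne']
  have hnonneg : 0 ≤ 1 + 2 * (a * b * t) * Real.cos α + (a * b * t) ^ 2 := by
    nlinarith [mul_nonneg hy (by linarith [Real.neg_one_le_cos α] : 0 ≤ 1 + Real.cos α),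
      sq_nonneg (1 - a * b * t)]
  rcases hnonneg.eq_or_lt with h | h
  · rw [← h, Real.log_zero]
    refine Real.log_nonneg ?_
    nlinarith [mul_nonneg (sq_nonneg a) ht, mul_nonneg (sq_nonneg b) ht,
      mul_nonneg (mul_nonneg (sq_nonneg a) ht) (mul_nonneg (sq_nonneg b) ht)]
  · refine Real.log_le_log h ?_
    nlinarith [mul_nonneg hy (by linarith [Real.cos_le_one α] : 0 ≤ 1 - Real.cos α),
      mul_nonneg (sq_nonneg (a - b)) ht]

/-- The Loi–Zedda lemma that the diastasis of the cigar metric is nonnegative: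
for `ρ₁, ρ₂ ≥ 0` and any angle `α`,
`∫₀^{ρ₁²} log(1+s)/s ds + ∫₀^{ρ₂²} log(1+s)/s ds
  − ∫₀^{ρ₁ρ₂} log(1+2y cos α+y²)/y dy ≥ 0`. -/
theorem cigar_diastasis_nonneg (ρ₁ ρ₂ α : ℝ) (h₁ : 0 ≤ ρ₁) (h₂ : 0 ≤ ρ₂) :
    0 ≤ (∫ s in (0:ℝ)..(ρ₁ ^ 2), Real.log (1 + s) / s) +
        (∫ s in (0:ℝ)..(ρ₂ ^ 2), Real.log (1 + s) / s) -
        ∫ y in (0:ℝ)..(ρ₁ * ρ₂), Real.log (1 + 2 * y * Real.cos α + y ^ 2) / y := by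
  have hi₁ := intervalIntegrable_log_one_add_mul_div (ρ₁ ^ 2) (sq_nonneg _)
  have hi₂ := intervalIntegrable_log_one_add_mul_div (ρ₂ ^ 2) (sq_nonneg _)
  rw [integral_div_id_rescale (fun s => Real.log (1 + s)) (by simp) (ρ₁ ^ 2),
    integral_div_id_rescale (fun s => Real.log (1 + s)) (by simp) (ρ₂ ^ 2),
    integral_div_id_rescale (fun y => Real.log (1 + 2 * y * Real.cos α + y ^ 2)) (by simp),
    ← intervalIntegral.integral_add hi₁ hi₂, sub_nonneg]
  by_cases hg : IntervalIntegrable (fun t => Real.log (1 + 2 * (ρ₁ * ρ₂ * t) * Real.cos α +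
      (ρ₁ * ρ₂ * t) ^ 2) / t) MeasureTheory.volume 0 1
  · refine intervalIntegral.integral_mono_on zero_le_one hg (hi₁.add hi₂) fun t ht => ?_
    rw [← add_div]
    exact div_le_div_of_nonneg_right (log_le_log_add_log ρ₁ ρ₂ α t h₁ h₂ ht.1) ht.1
  · rw [intervalIntegral.integral_undef hg]
    refine intervalIntegral.integral_nonneg zero_le_one fun t ht => ?_
    have ht0 : 0 ≤ t := ht.1
    have e₁ : 0 ≤ Real.log (1 + ρ₁ ^ 2 * t) :=
      Real.log_nonneg (by linarith [mul_nonneg (sq_nonneg ρ₁) ht0])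
    have e₂ : 0 ≤ Real.log (1 + ρ₂ ^ 2 * t) :=
      Real.log_nonneg (by linarith [mul_nonneg (sq_nonneg ρ₂) ht0])
    positivity
end

section
/- For every real number c > 0 there exists a natural number n such that the n-th derivative at 0 of the real function x ↦ exp( c · ∫₀^x log(1+t)/t dt ) is strictly negative. -/
/-!
Write `D x = ∫₀ˣ log(1+t)/t dt` and `f = exp (c D)`. The function `D` extends holomorphically to
the unit disc (`exists_complex_potential`), so `f` is the sum of its Taylor series at `0` on
`(-1, 1)`, and its real and complex Taylor coefficients agree
(`iteratedDeriv_ofReal_of_eqOn`).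

If no derivative of `f` at `0` were negative, the even part of that series would have nonnegative
coefficients, so `r ↦ f r + f (-r)` would be monotone on `[0, 1)`. Differentiating,
`-log(1-r) f(-r) ≤ log(1+r) f(r)` for `0 < r < 1`. But `D r - D (-r) ≤ 5`, because
`-log(1-t)/t ≤ 2/√(1-t)` is integrable up to `1`; hence `-log(1-r) ≤ exp(5c)` for all `r < 1`,
which fails as `r → 1`.
-/

open Set Filter Topology

/-- A holomorphic extension `P` to the unit disc of `x ↦ ∫₀ˣ log(1+t)/t dt`. The derivative is
recorded only at nonzero real points. -/
lemma exists_complex_potential : ∃ P : ℂ → ℂ, DifferentiableOn ℂ P (Metric.ball 0 1) ∧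
    (∀ x : ℝ, |x| < 1 → P x = ((∫ t in (0:ℝ)..x, Real.log (1 + t) / t : ℝ) : ℂ)) ∧
    (∀ x : ℝ, |x| < 1 → x ≠ 0 → HasDerivAt P ((Real.log (1 + x) / x : ℝ) : ℂ) x) := by
  have hlog : DifferentiableOn ℂ (fun z : ℂ => Complex.log (1 + z)) (Metric.ball 0 1) := by
    intro z hz
    have hz' : ‖z‖ < 1 := by simpa using hz
    exact (((differentiableAt_const _).add differentiableAt_id).clog
      (Complex.mem_slitPlane_of_norm_lt_one hz')).differentiableWithinAt
  -- `dslope` at `0` is `log(1+z)/z` with the removable singularity filled in.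
  have hG : DifferentiableOn ℂ (dslope (fun z : ℂ => Complex.log (1 + z)) 0)
      (Metric.ball 0 1) :=
    (Complex.differentiableOn_dslope (Metric.ball_mem_nhds 0 one_pos)).2 hlog
  have hGx : ∀ x : ℝ, |x| < 1 → x ≠ 0 → dslope (fun z : ℂ => Complex.log (1 + z)) 0 (x : ℂ)
      = ((Real.log (1 + x) / x : ℝ) : ℂ) := by
    intro x hx hx0
    rw [dslope_of_ne _ (by exact_mod_cast hx0), slope_def_field]
    have : 0 ≤ 1 + x := by linarith [(abs_lt.1 hx).1]
    push_cast [Complex.ofReal_log this]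
    simp
  obtain ⟨P, hP0, hP⟩ := hG.isExactOn_ball.with_val_at 0 0
  have hmem : ∀ x : ℝ, |x| < 1 → (x : ℂ) ∈ Metric.ball (0 : ℂ) 1 := by
    intro x hx; simpa using hx
  refine ⟨P, fun z hz => (hP z hz).differentiableAt.differentiableWithinAt, ?_, ?_⟩
  · intro x hx
    have hsub : ∀ t ∈ uIcc 0 x, |t| < 1 := by
      intro t ht
      have := abs_sub_left_of_mem_uIcc ht
      simp only [sub_zero] at this
      linarith
    have hint := intervalIntegral.integral_eq_sub_of_hasDerivAt (a := 0) (b := x)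
      (f := fun t : ℝ => P t)
      (f' := fun t : ℝ => dslope (fun z : ℂ => Complex.log (1 + z)) 0 (t : ℂ))
      (fun t ht => (hP _ (hmem t (hsub t ht))).comp_ofReal)
      (ContinuousOn.intervalIntegrable (hG.continuousOn.comp
        Complex.continuous_ofReal.continuousOn (fun t ht => hmem t (hsub t ht))))
    rw [Complex.ofReal_zero, hP0, sub_zero] at hint
    rw [← hint, ← intervalIntegral.integral_ofReal]
    refine intervalIntegral.integral_congr_ae ?_
    filter_upwards [MeasureTheory.Measure.ae_ne MeasureTheory.volume (0 : ℝ)] with t ht0 ht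
    exact hGx t (hsub t (uIoc_subset_uIcc ht)) ht0
  · intro x hx hx0
    rw [← hGx x hx hx0]
    exact hP _ (hmem x hx)

/-- If a holomorphic `F` restricts to the real function `f` on `(-1, 1)`, the complex iterated
derivatives of `F` at real points are the real iterated derivatives of `f`. -/
lemma iteratedDeriv_ofReal_of_eqOn {F : ℂ → ℂ} {f : ℝ → ℝ}
    (hF : DifferentiableOn ℂ F (Metric.ball 0 1))
    (hFf : ∀ x : ℝ, |x| < 1 → F x = f x) (n : ℕ) :
    ∀ x : ℝ, |x| < 1 → iteratedDeriv n F x = (iteratedDeriv n f x : ℝ) := by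
  have han : AnalyticOnNhd ℂ F (Metric.ball 0 1) := hF.analyticOnNhd Metric.isOpen_ball
  induction n with
  | zero => simpa using hFf
  | succ n ih =>
    intro x hx
    have hd : HasDerivAt (iteratedDeriv n F) (iteratedDeriv (n + 1) F x) (x : ℂ) := by
      rw [iteratedDeriv_succ]
      have := (han.iterated_deriv n) (x : ℂ) (by simpa using hx)
      rw [← iteratedDeriv_eq_iterate] at this
      exact this.differentiableAt.hasDerivAt
    have hev : (fun y : ℝ => iteratedDeriv n F y) =ᶠ[𝓝 x]
        fun y : ℝ => ((iteratedDeriv n f y : ℝ) : ℂ) := by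
      filter_upwards [(isOpen_lt continuous_abs continuous_const).mem_nhds hx] with y hy
      exact ih y hy
    have h1 := hd.comp_ofReal.congr_of_eventuallyEq hev.symm
    have h2 : HasDerivAt (iteratedDeriv n f) (iteratedDeriv (n + 1) F x).re x := by
      refine (hd.real_of_complex).congr_of_eventuallyEq ?_
      filter_upwards [hev] with y hy
      rw [hy, Complex.ofReal_re]
    rw [iteratedDeriv_succ (f := f), h2.deriv]
    exact h1.unique h2.ofReal_comp

/-- The bound on `-log(1-r)/r` which makes it integrable up to `r = 1`. -/
lemma neg_log_one_sub_div_le {r : ℝ} (h0 : 0 < r) (h1 : r < 1) :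
    -Real.log (1 - r) / r ≤ 2 / √(1 - r) := by
  set s := √(1 - r) with hs
  have hspos : 0 < s := Real.sqrt_pos.2 (by linarith)
  have hsq : s ^ 2 = 1 - r := Real.sq_sqrt (by linarith)
  have hl : Real.log (1 - r) = 2 * Real.log s := by
    rw [← hsq, Real.log_pow]; norm_num
  have := Real.one_sub_inv_le_log_of_pos hspos
  rw [hl, div_le_div_iff₀ h0 hspos]
  have h3 : s * (1 - s⁻¹) ≤ s * Real.log s := mul_le_mul_of_nonneg_left this hspos.le
  rw [mul_sub, mul_inv_cancel₀ hspos.ne'] at h3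
  nlinarith

/-- Analytic core of the Loi–Zedda theorem that the cigar metric rescaled by any
`c > 0` admits no local Kähler immersion into any complex space form: for every
`c > 0` some derivative at `0` of `x ↦ exp(c·∫₀^x log(1+t)/t dt)` is negative. -/
theorem cigar_not_projectively_induced (c : ℝ) (hc : 0 < c) :
    ∃ n : ℕ, iteratedDeriv n
      (fun x : ℝ => Real.exp (c * ∫ t in (0:ℝ)..x, Real.log (1 + t) / t)) 0 < 0 := by
  obtain ⟨P, hPdiff, hPx, hPd⟩ := exists_complex_potential
  by_contra! hneg
  set D : ℝ → ℝ := fun x => ∫ t in (0:ℝ)..x, Real.log (1 + t) / t with hD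
  set f : ℝ → ℝ := fun x => Real.exp (c * D x) with hf
  have hD0 : D 0 = 0 := by simp [hD]
  have hDre : ∀ x : ℝ, |x| < 1 → (fun y : ℝ => (P y).re) =ᶠ[𝓝 x] D := by
    intro x hx
    filter_upwards [(isOpen_lt continuous_abs continuous_const).mem_nhds hx] with y hy
    rw [hPx y hy, Complex.ofReal_re]
  have hDd : ∀ x : ℝ, |x| < 1 → x ≠ 0 → HasDerivAt D (Real.log (1 + x) / x) x := by
    intro x hx hx0
    simpa using (hPd x hx hx0).real_of_complex.congr_of_eventuallyEq (hDre x hx).symm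
  have hDc : ∀ x : ℝ, |x| < 1 → ContinuousAt D x := by
    intro x hx
    have h1 : DifferentiableAt ℂ P x :=
      hPdiff.differentiableAt (Metric.isOpen_ball.mem_nhds (by simpa using hx))
    exact (h1.hasDerivAt.real_of_complex.continuousAt).congr (hDre x hx)
  set F : ℂ → ℂ := fun z => Complex.exp (c * P z) with hF
  have hFdiff : DifferentiableOn ℂ F (Metric.ball 0 1) := (hPdiff.const_mul _).cexp
  have hFf : ∀ x : ℝ, |x| < 1 → F x = f x := by
    intro x hx
    simp only [hF, hf, hPx x hx, hD]
    push_cast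
    rfl
  have hsum : ∀ x : ℝ, |x| < 1 →
      HasSum (fun n : ℕ => (n.factorial : ℝ)⁻¹ * x ^ n * iteratedDeriv n f 0) (f x) := by
    intro x hx
    have h := Complex.hasSum_taylorSeries_on_ball (c := 0) (r := 1) (f := F) (z := (x : ℂ))
      (by simpa using hFdiff) (by simpa using hx)
    rw [hFf x hx] at h
    refine Complex.hasSum_ofReal.1 (h.congr_fun ?_)
    intro n
    have := iteratedDeriv_ofReal_of_eqOn hFdiff hFf n 0 (by simp)
    rw [Complex.ofReal_zero] at this
    rw [this]
    push_cast
    simp [mul_assoc]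
  have habs : ∀ r ∈ Ico (0:ℝ) 1, |r| < 1 ∧ |-r| < 1 := by
    intro r hr
    rw [abs_neg, abs_of_nonneg hr.1]
    exact ⟨hr.2, hr.2⟩
  -- Only even powers survive in `f r + f (-r)`, with nonnegative coefficients.
  have hmono : MonotoneOn (fun r => f r + f (-r)) (Ico 0 1) := by
    intro s hs r hr hsr
    refine hasSum_le ?_ ((hsum s (habs s hs).1).add (hsum (-s) (habs s hs).2))
      ((hsum r (habs r hr).1).add (hsum (-r) (habs r hr).2))
    intro n
    have hn := hneg n
    have hk : (0:ℝ) ≤ (n.factorial : ℝ)⁻¹ := by positivity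
    have hpow : s ^ n ≤ r ^ n := pow_le_pow_left₀ hs.1 hsr n
    have hpow2 : s ^ n + (-s) ^ n ≤ r ^ n + (-r) ^ n := by
      rcases n.even_or_odd with he | ho
      · rw [he.neg_pow, he.neg_pow]; linarith
      · rw [ho.neg_pow, ho.neg_pow]; linarith
    have := mul_le_mul_of_nonneg_right (mul_le_mul_of_nonneg_left hpow2 hk) hn
    linarith
  have hfd : ∀ x : ℝ, |x| < 1 → x ≠ 0 →
      HasDerivAt f (f x * (c * (Real.log (1 + x) / x))) x := fun x hx hx0 =>
    ((hDd x hx hx0).const_mul c).exp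
  have hkey : ∀ r ∈ Ioo (0:ℝ) 1,
      -Real.log (1 - r) * f (-r) ≤ Real.log (1 + r) * f r := by
    intro r hr
    obtain ⟨h1, h2⟩ := habs r (Ioo_subset_Ico_self hr)
    have hd1 := hfd r h1 hr.1.ne'
    have hd2 := (hfd (-r) h2 (neg_ne_zero.2 hr.1.ne')).scomp r (hasDerivAt_neg r)
    have hd := hd1.add hd2
    have hnn := (hd.hasDerivWithinAt (s := Ioo 0 1)).derivWithin
      ((isOpen_Ioo.uniqueDiffWithinAt hr))
    have hpos := (hmono.mono Ioo_subset_Ico_self).derivWithin_nonneg (x := r)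
    have hpos' : 0 ≤ f r * (c * (Real.log (1 + r) / r)) +
        (-1 : ℝ) • (f (-r) * (c * (Real.log (1 + -r) / -r))) := by
      rw [← hnn]; exact hpos
    have heq : f r * (c * (Real.log (1 + r) / r)) +
        (-1 : ℝ) • (f (-r) * (c * (Real.log (1 + -r) / -r))) =
        (c / r) * (Real.log (1 + r) * f r + Real.log (1 - r) * f (-r)) := by
      have := hr.1.ne'
      rw [smul_eq_mul, ← sub_eq_add_neg 1 r]
      field_simp
    rw [heq] at hpos'
    have := nonneg_of_mul_nonneg_right hpos' (div_pos hc hr.1)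
    linarith
  -- `4 √(1-r)` is an antiderivative of `-2/√(1-r)`, and `log(1+r)/r ≤ 1`.
  have hanti : AntitoneOn (fun r => D r - D (-r) + 4 * √(1 - r) - r) (Ico 0 1) := by
    have hder : ∀ r ∈ Ioo (0:ℝ) 1, HasDerivAt (fun r => D r - D (-r) + 4 * √(1 - r) - r)
        (Real.log (1 + r) / r - (-1 : ℝ) • (Real.log (1 + -r) / -r)
          + 4 * (-1 / (2 * √(1 - r))) - 1) r := by
      intro r hr
      obtain ⟨h1, h2⟩ := habs r (Ioo_subset_Ico_self hr)
      have hd1 := hDd r h1 hr.1.ne'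
      have hd2 := (hDd (-r) h2 (neg_ne_zero.2 hr.1.ne')).scomp r (hasDerivAt_neg r)
      have hd3 := ((hasDerivAt_id r).const_sub 1).sqrt (by simp; linarith [hr.2])
      exact ((hd1.sub hd2).add (hd3.const_mul 4)).sub (hasDerivAt_id r)
    refine antitoneOn_of_deriv_nonpos (convex_Ico 0 1) ?_ ?_ ?_
    · intro r hr
      obtain ⟨h1, h2⟩ := habs r hr
      have hc2 : ContinuousAt (fun r => D (-r)) r :=
        ContinuousAt.comp (hDc (-r) h2) continuous_neg.continuousAt
      exact (((hDc r h1).sub hc2).add (by fun_prop) |>.sub continuousAt_id).continuousWithinAt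
    · rw [interior_Ico]
      exact fun r hr => (hder r hr).differentiableAt.differentiableWithinAt
    · rw [interior_Ico]
      intro r hr
      rw [(hder r hr).deriv]
      have hb := neg_log_one_sub_div_le hr.1 hr.2
      have hl : Real.log (1 + r) / r ≤ 1 := by
        rw [div_le_one hr.1]
        linarith [Real.log_le_sub_one_of_pos (x := 1 + r) (by linarith [hr.1])]
      have e1 : (-1 : ℝ) • (Real.log (1 + -r) / -r) = -(-Real.log (1 - r) / r) := by
        rw [smul_eq_mul, ← sub_eq_add_neg 1 r, div_neg, neg_div]; ring
      have e2 : 4 * (-1 / (2 * √(1 - r))) = -(2 / √(1 - r)) := by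
        have : √(1 - r) ≠ 0 := (Real.sqrt_pos.2 (by linarith [hr.2])).ne'
        field_simp; norm_num
      rw [e1, e2]
      linarith
  have hbound : ∀ r ∈ Ioo (0:ℝ) 1, -Real.log (1 - r) ≤ Real.exp (5 * c) := by
    intro r hr
    have hA := hanti (left_mem_Ico.2 one_pos) (Ioo_subset_Ico_self hr) hr.1.le
    simp only [neg_zero, hD0, sub_zero, Real.sqrt_one] at hA
    have hDle : D r ≤ 5 + D (-r) := by linarith [Real.sqrt_nonneg (1 - r), hr.2]
    have hfle : f r ≤ Real.exp (5 * c) * f (-r) := by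
      simp only [hf]
      rw [← Real.exp_add]
      exact Real.exp_le_exp.2 (by nlinarith)
    have hl1 : Real.log (1 + r) ≤ 1 := by
      linarith [Real.log_le_sub_one_of_pos (x := 1 + r) (by linarith [hr.1]), hr.2]
    have hk := hkey r hr
    have hfr : 0 < f r := Real.exp_pos _
    have hfr' : 0 < f (-r) := Real.exp_pos _
    refine le_of_mul_le_mul_right (hk.trans ?_) hfr'
    nlinarith
  have hE : Real.exp (-(Real.exp (5 * c) + 1)) < 1 := by
    rw [Real.exp_lt_one_iff]
    linarith [Real.exp_pos (5 * c)]
  have hfin := hbound (1 - Real.exp (-(Real.exp (5 * c) + 1)))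
    ⟨by linarith, by linarith [Real.exp_pos (-(Real.exp (5 * c) + 1))]⟩
  rw [sub_sub_cancel, Real.log_exp] at hfin
  linarith
end

section
/- Fix a natural number k. For each n ∈ ℕ let c_n = ∑ ∏_{i=1}^{k+1} 1/(j_i)², where the sum runs over all (k+1)-tuples (j_1,…,j_{k+1}) of positive integers with j_1 + ⋯ + j_{k+1} = n (so c_n is the coefficient of x^n in (∑_{j≥1} x^j/j²)^{k+1}). Then n²·c_n converges, as n → ∞, to (k+1)·(π²/6)^k. -/
/-!
Since `1 / 0 ^ 2 = 0`, the positivity filter can be dropped, and `c_n` becomes the `(k+1)`-fold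
convolution power of the sequence `1 / n ^ 2`, whose sum is `π ^ 2 / 6`.

The key fact is `tendsto_sq_mul_conv`: if `a`, `b` are summable with sums `A`, `B`, and
`n ^ 2 * a n → α`, `n ^ 2 * b n → β`, then `n ^ 2 * (a * b) n → A * β + B * α` for the
convolution `a * b`. Indeed, if `i + j = n` and `i ≤ j`, then `n ^ 2 ≤ 4 * j ^ 2`, so dominated
convergence handles that half of the sum, and the other half is symmetric. Induction on `k`
finishes the proof: with `ζ = π ^ 2 / 6`, one step gives
`ζ * ((k + 1) * ζ ^ k) + ζ ^ (k + 1) * 1 = (k + 2) * ζ ^ (k + 1)`.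
-/

open Filter Topology Finset

/-- The half of the convolution where the index of `a` is the smaller one. The relation `P` is
`≤` or `<`, depending on which half receives the diagonal. -/
lemma tendsto_sq_mul_half_conv (P : ℕ → ℕ → Prop) [∀ i j, Decidable (P i j)]
    (hP : ∀ i j, P i j → i ≤ j) (hP' : ∀ i, ∀ᶠ j in atTop, P i j)
    {a b : ℕ → ℝ} {A β : ℝ} (ha : HasSum a A)
    (hb : Tendsto (fun n : ℕ => (n : ℝ) ^ 2 * b n) atTop (𝓝 β)) :
    Tendsto (fun n : ℕ => (n : ℝ) ^ 2 *
      ∑ p ∈ antidiagonal n, if P p.1 p.2 then a p.1 * b p.2 else 0) atTop (𝓝 (A * β)) := by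
  obtain ⟨C, hC⟩ : ∃ C, ∀ n : ℕ, |(n : ℝ) ^ 2 * b n| ≤ C := by
    obtain ⟨C, hC⟩ := hb.abs.bddAbove_range
    exact ⟨C, fun n => hC ⟨n, rfl⟩⟩
  have key : Tendsto (fun n : ℕ => ∑' i : ℕ, if i ≤ n ∧ P i (n - i) then
      (n : ℝ) ^ 2 * (a i * b (n - i)) else 0) atTop (𝓝 (∑' i, a i * β)) := by
    refine tendsto_tsum_of_dominated_convergence (bound := fun i => |a i| * (4 * C)) ?_ ?_ ?_
    · exact (summable_abs_iff.mpr ha.summable).mul_right _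
    · intro i
      rw [← tendsto_add_atTop_iff_nat i]
      have h1 : Tendsto (fun m : ℕ => ((m : ℝ) + i) / m) atTop (𝓝 1) := by
        have h := (tendsto_const_div_atTop_nhds_zero_nat (i : ℝ)).const_add 1
        rw [add_zero] at h
        refine h.congr' ?_
        filter_upwards [eventually_gt_atTop 0] with m hm
        have : (m : ℝ) ≠ 0 := by positivity
        field_simp
      have h2 := ((h1.pow 2).mul hb).const_mul (a i)
      rw [one_pow, one_mul] at h2
      refine h2.congr' ?_
      filter_upwards [hP' i, eventually_gt_atTop 0] with m hm hm0
      have : (m : ℝ) ≠ 0 := by positivity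
      rw [if_pos (by simpa using hm)]
      simp only [Nat.add_sub_cancel]
      push_cast
      field_simp
    · refine Eventually.of_forall fun n i => ?_
      have hC0 : 0 ≤ C := (abs_nonneg _).trans (hC 0)
      split_ifs with h
      · obtain ⟨hin, hPi⟩ := h
        have hle : (n : ℝ) ≤ 2 * (n - i : ℕ) := by
          have := hP _ _ hPi
          exact_mod_cast (by omega : n ≤ 2 * (n - i))
        have hsq : (n : ℝ) ^ 2 ≤ 4 * ((n - i : ℕ) : ℝ) ^ 2 := by
          have := pow_le_pow_left₀ (Nat.cast_nonneg n) hle 2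
          linarith [mul_pow (2 : ℝ) ((n - i : ℕ) : ℝ) 2]
        have hCi := hC (n - i)
        rw [abs_mul, abs_of_nonneg (sq_nonneg _)] at hCi
        rw [Real.norm_eq_abs, abs_mul, abs_mul, abs_of_nonneg (sq_nonneg _)]
        calc (n : ℝ) ^ 2 * (|a i| * |b (n - i)|)
            ≤ 4 * ((n - i : ℕ) : ℝ) ^ 2 * (|a i| * |b (n - i)|) := by gcongr
          _ = |a i| * (4 * (((n - i : ℕ) : ℝ) ^ 2 * |b (n - i)|)) := by ring
          _ ≤ |a i| * (4 * C) := by gcongr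
      · rw [norm_zero]
        positivity
  rw [(ha.mul_right β).tsum_eq] at key
  refine key.congr fun n => ?_
  rw [tsum_eq_sum (s := range (n + 1)), mul_sum,
    Nat.sum_antidiagonal_eq_sum_range_succ_mk]
  · refine sum_congr rfl fun i hi => ?_
    have : i ≤ n := by simpa [Nat.lt_succ_iff] using hi
    simp [this]
  · intro i hi
    rw [if_neg]
    rintro ⟨h, -⟩
    exact hi (by simpa [Nat.lt_succ_iff] using h)

/-- Terms of size `n⁻²` behave subexponentially under convolution: a large total index comes
from one large index, the other one contributing its full sum. -/
lemma tendsto_sq_mul_conv {a b : ℕ → ℝ} {A B α β : ℝ} (ha : HasSum a A) (hb : HasSum b B)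
    (ha' : Tendsto (fun n : ℕ => (n : ℝ) ^ 2 * a n) atTop (𝓝 α))
    (hb' : Tendsto (fun n : ℕ => (n : ℝ) ^ 2 * b n) atTop (𝓝 β)) :
    Tendsto (fun n : ℕ => (n : ℝ) ^ 2 * ∑ p ∈ antidiagonal n, a p.1 * b p.2)
      atTop (𝓝 (A * β + B * α)) := by
  have h1 := tendsto_sq_mul_half_conv (fun i j => i ≤ j) (fun _ _ h => h)
    (fun i => eventually_ge_atTop i) ha hb'
  have h2 := tendsto_sq_mul_half_conv (fun i j => i < j) (fun _ _ h => h.le)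
    (fun i => eventually_gt_atTop i) hb ha'
  refine (h1.add h2).congr fun n => ?_
  rw [← mul_add]
  congr 1
  rw [← Nat.sum_antidiagonal_swap (n := n)
    (f := fun p : ℕ × ℕ => if p.1 < p.2 then b p.1 * a p.2 else 0), ← sum_add_distrib]
  refine sum_congr rfl fun p _ => ?_
  rcases le_or_gt p.1 p.2 with h | h
  · simp [h, h.not_gt]
  · simp [h, h.not_ge, mul_comm]

lemma hasSum_conv {a b : ℕ → ℝ} {A B : ℝ} (ha : HasSum a A) (hb : HasSum b B) :
    HasSum (fun n : ℕ => ∑ p ∈ antidiagonal n, a p.1 * b p.2) (A * B) := by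
  have ha' := ha.summable.norm
  have hb' := hb.summable.norm
  rw [← ha.tsum_eq, ← hb.tsum_eq,
    tsum_mul_tsum_eq_tsum_sum_antidiagonal_of_summable_norm ha' hb']
  exact (summable_norm_sum_mul_antidiagonal_of_summable_norm ha' hb').of_norm.hasSum

lemma sum_antidiagonalTuple_succ (a : ℕ → ℝ) (k n : ℕ) :
    ∑ j ∈ Nat.antidiagonalTuple (k + 1) n, ∏ i, a (j i) =
      ∑ p ∈ antidiagonal n, a p.1 * ∑ j ∈ Nat.antidiagonalTuple k p.2, ∏ i, a (j i) := by
  simp_rw [mul_sum]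
  rw [sum_sigma']
  refine sum_bij' (fun j _ => ⟨(j 0, ∑ i : Fin k, j i.succ), Fin.tail j⟩)
    (fun x _ => Fin.cons x.1.1 x.2) ?_ ?_ ?_ ?_ ?_
  · intro j hj
    rw [Nat.mem_antidiagonalTuple, Fin.sum_univ_succ] at hj
    simp [Nat.mem_antidiagonalTuple, hj, Fin.tail]
  · rintro ⟨⟨p, q⟩, j⟩ hx
    simp only [mem_sigma, HasAntidiagonal.mem_antidiagonal, Nat.mem_antidiagonalTuple] at hx
    simp [Nat.mem_antidiagonalTuple, Fin.sum_univ_succ, hx.1, hx.2]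
  · intro j _
    exact Fin.cons_self_tail j
  · rintro ⟨⟨p, q⟩, j⟩ hx
    simp only [mem_sigma, HasAntidiagonal.mem_antidiagonal, Nat.mem_antidiagonalTuple] at hx
    simp [hx.2]
  · intro j _
    simp [Fin.prod_univ_succ, Fin.tail]

/-- The sum of the convolution power is carried along because the induction step of the limit
uses it. -/
lemma hasSum_and_tendsto {a : ℕ → ℝ} {A : ℝ} (ha : HasSum a A)
    (ha' : Tendsto (fun n : ℕ => (n : ℝ) ^ 2 * a n) atTop (𝓝 1)) (k : ℕ) :
    HasSum (fun n : ℕ => ∑ j ∈ Nat.antidiagonalTuple (k + 1) n, ∏ i, a (j i)) (A ^ (k + 1)) ∧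
    Tendsto (fun n : ℕ => (n : ℝ) ^ 2 *
      ∑ j ∈ Nat.antidiagonalTuple (k + 1) n, ∏ i, a (j i)) atTop (𝓝 ((k + 1) * A ^ k)) := by
  induction k with
  | zero => simpa [Nat.antidiagonalTuple_one] using And.intro ha ha'
  | succ k ih =>
    simp_rw [fun n => sum_antidiagonalTuple_succ a (k + 1) n]
    constructor
    · rw [pow_succ']
      have h := hasSum_conv ha ih.1
      exact h
    · have hlim : ((k + 1 : ℕ) + 1 : ℝ) * A ^ (k + 1) =
          A * ((k + 1) * A ^ k) + A ^ (k + 1) * 1 := by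
        push_cast
        ring
      rw [hlim]
      have h := tendsto_sq_mul_conv ha ih.1 ha' ih.2
      exact h


/-- Bell-polynomial limit used in the proof that the rescaled cigar metric is not
projectively induced: with `c_n` the sum over compositions of `n` into `k+1`
positive parts of the products of the reciprocal squares of the parts (i.e. the
`n`-th coefficient of `(∑_{j≥1} x^j/j²)^{k+1}`), one has
`n²·c_n → (k+1)·(π²/6)^k`. -/
theorem bell_coefficient_limit (k : ℕ) :
    Filter.Tendsto
      (fun n : ℕ => (n : ℝ) ^ 2 *
        ∑ j ∈ (Finset.Nat.antidiagonalTuple (k + 1) n).filter (fun j => ∀ i, 0 < j i),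
          ∏ i, (1 : ℝ) / (j i : ℝ) ^ 2)
      Filter.atTop (nhds ((k + 1) * (Real.pi ^ 2 / 6) ^ k)) := by
  have h1 : Tendsto (fun n : ℕ => (n : ℝ) ^ 2 * (1 / (n : ℝ) ^ 2)) atTop (𝓝 1) := by
    refine tendsto_const_nhds.congr' ?_
    filter_upwards [eventually_gt_atTop 0] with n hn
    have : (n : ℝ) ≠ 0 := by positivity
    field_simp
  refine (hasSum_and_tendsto hasSum_zeta_two h1 k).2.congr fun n => ?_
  congr 1
  symm
  -- A tuple with a zero entry contributes a factor `1 / 0 ^ 2 = 0`.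
  refine sum_filter_of_ne fun j _ hj i => ?_
  by_contra h
  exact hj (prod_eq_zero (mem_univ i) (by simp [Nat.eq_zero_of_not_pos h]))
end

section
/- Let F(x) = (x − 1)(x − 11/4)(x + 3/4). For every real number c > 0 there exists a natural number j such that the j-th derivative at 0 of the real function x ↦ (F(x))^{−c} (real power; F(0) = 33/16 > 0 and F is positive and smooth near 0) is strictly negative. -/
/-!
Write `F(x) = (x - 1)(x - 11/4)(x + 3/4) = x³ - 3x² - x/16 + 33/16` and `g = F ^ (-c)`.

On the complex disc `‖z‖ ≤ 1/2` the polynomial `F` has positive real part, so `z ↦ F(z) ^ (-c)` is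
holomorphic there and the Taylor series of `g` at `0` converges to `g(x)` for every real `|x| < 1/2`
(`hasSum_hartogs_taylor`). If all Taylor coefficients were nonnegative, comparing the two series
term by term would give `g(-t) ≤ g(t)` for `0 ≤ t < 1/2`. But `F(-t) - F(t) = t/8 - 2t³ < 0` for
`t > 1/4`, so `g(-t) > g(t)` at `t = 1/3`, a contradiction.
-/

/-- Positivity of the real part keeps the cubic inside the slit plane, where the principal power
is holomorphic. -/
lemma hartogs_cubic_re_pos (z : ℂ) (hz : ‖z‖ ≤ 1 / 2) :
    0 < ((z - 1) * (z - 11 / 4) * (z + 3 / 4)).re := by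
  have hexp : (z - 1) * (z - 11 / 4) * (z + 3 / 4)
      = ((33 / 16 : ℝ) : ℂ) - (-z ^ 3 + 3 * z ^ 2 + z / 16) := by
    push_cast; ring
  have hnorm : ‖-z ^ 3 + 3 * z ^ 2 + z / 16‖ ≤ (1 / 2) ^ 3 + 3 * (1 / 2) ^ 2 + (1 / 2) / 16 := by
    calc ‖-z ^ 3 + 3 * z ^ 2 + z / 16‖ ≤ ‖-z ^ 3‖ + ‖3 * z ^ 2‖ + ‖z / 16‖ := norm_add₃_le
      _ = ‖z‖ ^ 3 + 3 * ‖z‖ ^ 2 + ‖z‖ / 16 := by simp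
      _ ≤ _ := by gcongr
  have hre := Complex.re_le_norm (-z ^ 3 + 3 * z ^ 2 + z / 16)
  rw [hexp, Complex.sub_re, Complex.ofReal_re]
  norm_num at hnorm
  linarith

/-- The Taylor series at `0` of the real function `F ^ (-c)` converges to it on `(-1/2, 1/2)`,
by restriction of the holomorphic power to the real axis. -/
lemma hasSum_hartogs_taylor (c : ℝ) {y : ℝ} (hy : |y| < 1 / 2) :
    HasSum (fun n : ℕ => ((n.factorial : ℝ))⁻¹ * (y ^ n * iteratedDeriv n
      (fun x : ℝ => ((x - 1) * (x - 11 / 4) * (x + 3 / 4)) ^ (-c)) 0))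
      (((y - 1) * (y - 11 / 4) * (y + 3 / 4)) ^ (-c)) := by
  have hd : DifferentiableOn ℂ
      (fun z : ℂ => ((z - 1) * (z - 11 / 4) * (z + 3 / 4)) ^ (-(c : ℂ)))
      (Metric.closedBall (Complex.ofRealCLM 0) ((1 / 2 : NNReal) : ℝ)) := by
    intro z hz
    have hz' : ‖z‖ ≤ 1 / 2 := by simpa using hz
    refine DifferentiableAt.differentiableWithinAt ?_
    refine DifferentiableAt.cpow (by fun_prop) (by fun_prop) ?_
    exact Or.inl (hartogs_cubic_re_pos z hz')
  have hp := (Complex.reCLM.comp_hasFPowerSeriesOnBall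
    ((hd.hasFPowerSeriesOnBall (by norm_num)).restrictScalars
      (𝕜 := ℝ)).compContinuousLinearMap)
  have hn : ‖Complex.ofRealCLM‖ₑ = 1 := by
    rw [← ofReal_norm, Complex.ofRealCLM_norm, ENNReal.ofReal_one]
  rw [hn, div_one] at hp
  have hball : ∀ x : ℝ, x ∈ Metric.eball (0 : ℝ) ((1 / 2 : NNReal) : ENNReal) ↔ |x| < 1 / 2 := by
    intro x
    rw [Metric.eball_coe]
    simp
  have hg := hp.congr (g := fun x : ℝ => ((x - 1) * (x - 11 / 4) * (x + 3 / 4)) ^ (-c)) (by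
    intro x hx
    have hx' := (hball x).1 hx
    have hcast : ((x : ℂ) - 1) * (x - 11 / 4) * (x + 3 / 4)
        = (((x - 1) * (x - 11 / 4) * (x + 3 / 4) : ℝ) : ℂ) := by push_cast; ring
    have hpos := hartogs_cubic_re_pos (x : ℂ) (by simpa using hx'.le)
    rw [hcast, Complex.ofReal_re] at hpos
    simp only [Function.comp_apply, Complex.ofRealCLM_apply, Complex.reCLM_apply]
    rw [hcast, ← Complex.ofReal_neg, ← Complex.ofReal_cpow hpos.le, Complex.ofReal_re])
  have hs := hg.hasSum_iteratedFDeriv ((hball y).2 hy)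
  simpa only [iteratedFDeriv_apply_eq_iteratedDeriv_mul_prod, Finset.prod_const, Finset.card_univ,
    Fintype.card_fin, smul_eq_mul, zero_add] using hs


/-- Analytic content of the Loi–Zedda proposition that the Hartogs domain built
from `F(x) = (x−1)(x−11/4)(x+3/4)` is not projectively induced for any rescaling:
for every `c > 0` some derivative at `0` of `x ↦ F(x)^{−c}` is negative. -/
theorem hartogs_cubic_not_projectively_induced (c : ℝ) (hc : 0 < c) :
    ∃ j : ℕ, iteratedDeriv j
      (fun x : ℝ => ((x - 1) * (x - 11 / 4) * (x + 3 / 4)) ^ (-c)) 0 < 0 := by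
  by_contra! hnonneg
  have hle := hasSum_le (fun n => ?_)
    (hasSum_hartogs_taylor c (y := -(1 / 3)) (by norm_num [abs_of_pos]))
    (hasSum_hartogs_taylor c (y := 1 / 3) (by norm_num [abs_of_pos]))
  · refine absurd hle (not_le.mpr ?_)
    exact Real.rpow_lt_rpow_of_neg (by norm_num) (by norm_num) (by linarith)
  · have hpow : (-(1 / 3) : ℝ) ^ n ≤ (1 / 3) ^ n := by
      refine (le_abs_self _).trans_eq ?_
      rw [abs_pow, abs_neg, abs_of_pos (by norm_num)]
    have hn := hnonneg n
    gcongr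
end

section
/- Let m ≥ 0 and α > 0 be real numbers, and let u : (0,∞) → (0,∞) be a function satisfying u(x)²·exp(2m·u(x)²) = x for all x > 0. Then (exp(α·(u(x)² + m·u(x)⁴)) − 1 − α·x)/x² tends to α(α − 2m)/2 as x → 0⁺. In particular this limit is strictly negative if and only if m > α/2. -/
/-!
Put `t = u(x)²`, so that `x = t e^{2mt}`, `0 < t ≤ x`, and `t → 0⁺` as `x → 0⁺`. With
`y = α(t + mt²)`, the numerator divided by `t²` is
`((e^y - 1 - y)/y²) · α²(1 + mt)² + αm - α (e^{2mt} - 1)/t`, which tends to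
`α²/2 + αm - 2αm = α(α - 2m)/2`, while `x²/t² = e^{4mt} → 1`.
-/

open Filter Topology

lemma tendsto_exp_second_order :
    Tendsto (fun y : ℝ => (Real.exp y - 1 - y) / y ^ 2) (𝓝[>] 0) (𝓝 (1 / 2)) := by
  have h := ((Real.exp_sub_sum_range_succ_isLittleO_pow 2).tendsto_div_nhds_zero).mono_left
    (nhdsWithin_le_nhds (s := Set.Ioi 0))
  have h2 := h.add_const (1 / 2)
  rw [zero_add] at h2
  refine h2.congr' ?_
  filter_upwards [self_mem_nhdsWithin] with y hy
  have hy' : y ≠ 0 := ne_of_gt hy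
  simp [Finset.sum_range_succ]
  field_simp
  ring

lemma tendsto_exp_mul_sub_one_div (c : ℝ) :
    Tendsto (fun t : ℝ => (Real.exp (c * t) - 1) / t) (𝓝[>] 0) (𝓝 c) := by
  have h : HasDerivAt (fun t : ℝ => Real.exp (c * t)) c 0 := by
    simpa using ((hasDerivAt_id (0 : ℝ)).const_mul c).exp
  have h2 := h.tendsto_slope_zero_right
  refine h2.congr fun t => ?_
  simp [div_eq_inv_mul]

/-- The limit of the theorem in the parameter `t = u²`, where `x = t e^{2mt}`. -/
lemma tendsto_param (m α : ℝ) (hm : 0 ≤ m) (hα : 0 < α) :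
    Tendsto (fun t : ℝ => (Real.exp (α * (t + m * t ^ 2)) - 1 - α * (t * Real.exp (2 * m * t))) /
      (t * Real.exp (2 * m * t)) ^ 2) (𝓝[>] 0) (𝓝 (α * (α - 2 * m) / 2)) := by
  have hy : Tendsto (fun t : ℝ => α * (t + m * t ^ 2)) (𝓝[>] 0) (𝓝[>] 0) := by
    refine tendsto_nhdsWithin_iff.2 ⟨?_, ?_⟩
    · have : Continuous (fun t : ℝ => α * (t + m * t ^ 2)) := by fun_prop
      simpa using (this.tendsto 0).mono_left nhdsWithin_le_nhds
    · filter_upwards [self_mem_nhdsWithin] with t ht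
      have ht : 0 < t := ht
      show 0 < α * (t + m * t ^ 2)
      positivity
  have h1 := tendsto_exp_second_order.comp hy
  have h2 := tendsto_exp_mul_sub_one_div (2 * m)
  have h3 : Tendsto (fun t : ℝ => α ^ 2 * (1 + m * t) ^ 2) (𝓝[>] 0) (𝓝 (α ^ 2)) := by
    have : Continuous (fun t : ℝ => α ^ 2 * (1 + m * t) ^ 2) := by fun_prop
    simpa using (this.tendsto 0).mono_left nhdsWithin_le_nhds
  have h4 : Tendsto (fun t : ℝ => Real.exp (2 * m * t) ^ 2) (𝓝[>] 0) (𝓝 1) := by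
    have : Continuous (fun t : ℝ => Real.exp (2 * m * t) ^ 2) := by fun_prop
    simpa using (this.tendsto 0).mono_left nhdsWithin_le_nhds
  have h5 := (((h1.mul h3).add_const (α * m)).sub (h2.const_mul α)).div h4 one_ne_zero
  have e : (1 / 2 * α ^ 2 + α * m - α * (2 * m)) / 1 = α * (α - 2 * m) / 2 := by ring
  rw [e] at h5
  refine h5.congr' ?_
  filter_upwards [self_mem_nhdsWithin] with t ht
  have ht : 0 < t := ht
  have hE := Real.exp_pos (2 * m * t)
  have hq : 0 < 1 + m * t := by positivity
  have hfac : α * (t + m * t ^ 2) = α * t * (1 + m * t) := by ring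
  simp only [Pi.div_apply, Function.comp_apply, hfac]
  generalize Real.exp (2 * m * t) = E at *
  generalize Real.exp (α * t * (1 + m * t)) = F at *
  field_simp
  ring

/-- Loi–Zedda–Zuddas lemma for the Taub–NUT metric: with `u(x) > 0` determined by
`u² e^{2mu²} = x`, the second-order Taylor behaviour of `e^{α(u² + mu⁴)}` at `0⁺`
is `(e^{α(u²+mu⁴)} − 1 − αx)/x² → α(α−2m)/2`, which is negative iff `m > α/2`. -/
theorem taubNUT_second_coefficient (m α : ℝ) (hm : 0 ≤ m) (hα : 0 < α)
    (u : ℝ → ℝ) (hu : ∀ x > 0, 0 < u x)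
    (heq : ∀ x > 0, (u x) ^ 2 * Real.exp (2 * m * (u x) ^ 2) = x) :
    Filter.Tendsto
      (fun x : ℝ =>
        (Real.exp (α * ((u x) ^ 2 + m * (u x) ^ 4)) - 1 - α * x) / x ^ 2)
      (nhdsWithin 0 (Set.Ioi 0)) (nhds (α * (α - 2 * m) / 2)) ∧
    (α * (α - 2 * m) / 2 < 0 ↔ α / 2 < m) := by
  constructor
  · have ht : Tendsto (fun x => u x ^ 2) (𝓝[>] 0) (𝓝[>] 0) := by
      refine tendsto_nhdsWithin_iff.2 ⟨?_, ?_⟩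
      · refine tendsto_of_tendsto_of_tendsto_of_le_of_le' tendsto_const_nhds
          (tendsto_id.mono_left nhdsWithin_le_nhds) (Eventually.of_forall fun x => sq_nonneg _) ?_
        -- `u² ≤ u² e^{2mu²} = x`
        filter_upwards [self_mem_nhdsWithin] with x hx
        calc u x ^ 2 ≤ u x ^ 2 * Real.exp (2 * m * u x ^ 2) :=
              le_mul_of_one_le_right (sq_nonneg _) (Real.one_le_exp (by positivity))
          _ = x := heq x hx
      · filter_upwards [self_mem_nhdsWithin] with x hx
        exact pow_pos (hu x hx) 2
    refine ((tendsto_param m α hm hα).comp ht).congr' ?_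
    filter_upwards [self_mem_nhdsWithin] with x hx
    simp only [Function.comp_apply]
    rw [heq x hx, ← pow_mul]
  · constructor
    · intro h
      by_contra! h'
      nlinarith [mul_nonneg hα.le (by linarith : 0 ≤ α - 2 * m)]
    · intro h
      nlinarith [mul_pos hα (by linarith : 0 < 2 * m - α)]
end
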